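/- arXiv:1703.00145 — 2 statements merged into one kernel-verified Lean document; each statement's English description precedes it below -/
import Mathlib

section
/- Let (X,d) be a bicomplete T0-quasi-metric space and J : X → X a single-valued map continuous with respect to d^s such that r·d(x,y) ≤ d(Jx,Jy) for all x,y ∈ X, for some constant r > 0. Let F : X → CB(X) be a set-valued map satisfying H(Fx,Fy) ≤ α·d(Jx,Jy) for all x,y ∈ X, where α ∈ (0,1) and rα < 1. If J and F have the approximate mix-point property, i.e. inf_{x∈X} sup_{y∈Fx} d^s(Jx,y) = 0, then F has a J-fixed point, i.e. there exists x ∈ X with Jx ∈ Fx. -/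
open Set Filter
open scoped ENNReal

noncomputable section

/-- The symmetrization `d^s(x,y) = max (d x y) (d y x)` of a quasi-pseudometric. -/
def symm2 {X : Type*} (d : X → X → ℝ) (x y : X) : ℝ := max (d x y) (d y x)

/-- The (extended) Hausdorff-type distance
`H(A,B) = max (sup_{a∈A} inf_{b∈B} d a b) (sup_{b∈B} inf_{a∈A} d a b)`. -/
def qH {X : Type*} (d : X → X → ℝ) (A B : Set X) : ℝ≥0∞ :=
  max (⨆ a ∈ A, ⨅ b ∈ B, ENNReal.ofReal (d a b))
      (⨆ b ∈ B, ⨅ a ∈ A, ENNReal.ofReal (d a b))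

/-- Distance from a point to a set: `d(x,A) = inf_{a∈A} d x a`. -/
def dPS {X : Type*} (d : X → X → ℝ) (x : X) (A : Set X) : ℝ≥0∞ :=
  ⨅ a ∈ A, ENNReal.ofReal (d x a)

/-- Distance from a set to a point: `d(A,x) = inf_{a∈A} d a x`. -/
def dSP {X : Type*} (d : X → X → ℝ) (A : Set X) (x : X) : ℝ≥0∞ :=
  ⨅ a ∈ A, ENNReal.ofReal (d a x)

/-!
An `ε`-approximate mix-point of `J` and `F` is an `x` with `d^s (J x) y < ε` for all `y ∈ F x`.
If `x` and `y` are `ε`- and `δ`-approximate mix-points, then passing from `J x` to `J y` through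
`F x` and `F y` costs at most `ε + α d (J x) (J y) + δ`, so `(1 - α) d (J x) (J y) < ε + δ`.
Since `J` expands distances by at least `r`, a sequence of ever better approximate mix-points is
Cauchy, hence converges to some `x`. By continuity of `J`, approximate mix-points `u` exist with
`J u` arbitrarily close to `J x`, and the contraction condition then forces every point of `F x`
to coincide with `J x`.
-/

section Distance

variable {X : Type*} {d : X → X → ℝ} {A B : Set X} {a b x y : X} {ε : ℝ}

theorem symm2_comm (d : X → X → ℝ) (x y : X) : symm2 d x y = symm2 d y x :=
  max_comm _ _

theorem symm2_swap (d : X → X → ℝ) : symm2 (Function.swap d) = symm2 d :=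
  funext₂ fun _ _ => max_comm _ _

theorem le_symm2_left (d : X → X → ℝ) (x y : X) : d x y ≤ symm2 d x y :=
  le_max_left _ _

theorem le_symm2_right (d : X → X → ℝ) (x y : X) : d y x ≤ symm2 d x y :=
  le_max_right _ _

theorem eq_of_forall_symm2_le (hd_nonneg : ∀ x y, 0 ≤ d x y)
    (hd_T0 : ∀ x y, d x y = 0 → d y x = 0 → x = y) (h : ∀ ε > 0, symm2 d x y ≤ ε) : x = y := by
  have hxy : symm2 d x y ≤ 0 := le_of_forall_gt_imp_ge_of_dense h
  exact hd_T0 x y (((le_symm2_left d x y).trans hxy).antisymm (hd_nonneg x y))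
    (((le_symm2_right d x y).trans hxy).antisymm (hd_nonneg y x))

theorem qH_swap (d : X → X → ℝ) (A B : Set X) : qH (Function.swap d) A B = qH d B A :=
  max_comm _ _

theorem exists_lt_of_qH_lt (h : qH d A B < ENNReal.ofReal ε) (ha : a ∈ A) :
    ∃ b ∈ B, d a b < ε := by
  have hinf : ⨅ b ∈ B, ENNReal.ofReal (d a b) < ENNReal.ofReal ε :=
    calc ⨅ b ∈ B, ENNReal.ofReal (d a b)
      _ ≤ ⨆ a ∈ A, ⨅ b ∈ B, ENNReal.ofReal (d a b) :=
        le_biSup (fun a => ⨅ b ∈ B, ENNReal.ofReal (d a b)) ha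
      _ ≤ qH d A B := le_max_left _ _
      _ < ENNReal.ofReal ε := h
  simp only [iInf_lt_iff] at hinf
  obtain ⟨b, hb, hab⟩ := hinf
  exact ⟨b, hb, (ENNReal.ofReal_lt_ofReal_iff'.1 hab).1⟩

end Distance

section MixPoint

variable {X Y : Type*} {ρ : Y → Y → ℝ} {J : X → Y} {F : X → Set Y} {α ε δ : ℝ} {x y u : X} {b : Y}

/-- `x` is an `ε`-approximate mix-point of `J` and `F`: all of `F x` lies within `ρ^s`-distance
less than `ε` of `J x`. The approximate mix-point property says that these exist for all `ε > 0`.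
The space carrying `ρ` may differ from the common domain of `J` and `F`. -/
def IsApproxMixPoint (ρ : Y → Y → ℝ) (J : X → Y) (F : X → Set Y) (ε : ℝ) (x : X) : Prop :=
  ∀ y ∈ F x, symm2 ρ (J x) y < ε

/-- `F` is a set-valued contraction relative to `J` with constant `α`, measured by the
Hausdorff-type distance `qH ρ`. As `ρ` is not symmetric, the conditions for `(x, y)` and `(y, x)`
differ; imposing both makes the notion invariant under replacing `ρ` by its conjugate. -/
def IsSetContraction (ρ : Y → Y → ℝ) (J : X → Y) (F : X → Set Y) (α : ℝ) : Prop :=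
  ∀ x y, qH ρ (F x) (F y) ≤ ENNReal.ofReal (α * ρ (J x) (J y))

theorem IsApproxMixPoint.mono (h : IsApproxMixPoint ρ J F ε x) (hεδ : ε ≤ δ) :
    IsApproxMixPoint ρ J F δ x :=
  fun y hy => (h y hy).trans_le hεδ

theorem IsApproxMixPoint.swap (h : IsApproxMixPoint ρ J F ε x) :
    IsApproxMixPoint (Function.swap ρ) J F ε x := by
  rwa [IsApproxMixPoint, symm2_swap]

theorem exists_isApproxMixPoint
    (hmix : (⨅ x, ⨆ y ∈ F x, ENNReal.ofReal (symm2 ρ (J x) y)) = 0) (hε : 0 < ε) :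
    ∃ x, IsApproxMixPoint ρ J F ε x := by
  obtain ⟨x, hx⟩ := iInf_lt_iff.1 (hmix.trans_lt (ENNReal.ofReal_pos.2 hε))
  refine ⟨x, fun y hy => (ENNReal.ofReal_lt_ofReal_iff hε).1 (lt_of_le_of_lt ?_ hx)⟩
  exact le_biSup (fun y => ENNReal.ofReal (symm2 ρ (J x) y)) hy

theorem exists_seq_eventually_isApproxMixPoint
    (hmix : (⨅ x, ⨆ y ∈ F x, ENNReal.ofReal (symm2 ρ (J x) y)) = 0) :
    ∃ u : ℕ → X, ∀ ε > 0, ∀ᶠ n in atTop, IsApproxMixPoint ρ J F ε (u n) := by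
  choose u hu using fun n : ℕ =>
    exists_isApproxMixPoint hmix (Nat.one_div_pos_of_nat (α := ℝ) (n := n))
  refine ⟨u, fun ε hε => ?_⟩
  filter_upwards [tendsto_one_div_add_atTop_nhds_zero_nat.eventually_lt_const hε] with n hn
  exact (hu n).mono hn.le

namespace IsSetContraction

theorem swap (hF : IsSetContraction ρ J F α) : IsSetContraction (Function.swap ρ) J F α :=
  fun x y => (qH_swap ρ (F x) (F y)).trans_le (hF y x)

theorem exists_lt (hF : IsSetContraction ρ J F α) (hρ_nonneg : ∀ x y, 0 ≤ ρ x y) (hα : 0 ≤ α)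
    (hb : b ∈ F x) (y : X) (hε : 0 < ε) : ∃ c ∈ F y, ρ b c < α * ρ (J x) (J y) + ε := by
  have hpos : 0 < α * ρ (J x) (J y) + ε := by have := hρ_nonneg (J x) (J y); positivity
  exact exists_lt_of_qH_lt ((hF x y).trans_lt
    ((ENNReal.ofReal_lt_ofReal_iff hpos).2 (lt_add_of_pos_right _ hε))) hb

theorem one_sub_mul_dist_lt (hF : IsSetContraction ρ J F α) (hρ_nonneg : ∀ x y, 0 ≤ ρ x y)
    (hρ_tri : ∀ x y z, ρ x z ≤ ρ x y + ρ y z) (hα : 0 ≤ α) (hx_ne : (F x).Nonempty)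
    (hx : IsApproxMixPoint ρ J F ε x) (hy : IsApproxMixPoint ρ J F δ y) :
    (1 - α) * ρ (J x) (J y) < ε + δ := by
  obtain ⟨a, ha⟩ := hx_ne
  have hxa : ρ (J x) a < ε := (le_symm2_left ρ _ _).trans_lt (hx a ha)
  obtain ⟨b, hb, hab⟩ := hF.exists_lt hρ_nonneg hα ha y (sub_pos.2 hxa)
  have hby : ρ b (J y) < δ := (le_symm2_right ρ _ _).trans_lt (hy b hb)
  have hpath : ρ (J x) (J y) ≤ ρ (J x) a + (ρ a b + ρ b (J y)) :=
    (hρ_tri _ a _).trans (by gcongr; exact hρ_tri _ _ _)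
  linarith

theorem symm2_lt_of_isApproxMixPoint {d : X → X → ℝ} {r : ℝ} (hF : IsSetContraction ρ J F α)
    (hρ_nonneg : ∀ x y, 0 ≤ ρ x y) (hρ_tri : ∀ x y z, ρ x z ≤ ρ x y + ρ y z) (hr : 0 < r)
    (hJ_exp : ∀ x y, r * d x y ≤ ρ (J x) (J y)) (hF_ne : ∀ x, (F x).Nonempty)
    (hα0 : 0 ≤ α) (hα1 : α < 1) (hx : IsApproxMixPoint ρ J F ((1 - α) * (r * ε) / 2) x)
    (hy : IsApproxMixPoint ρ J F ((1 - α) * (r * ε) / 2) y) : symm2 d x y < ε := by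
  have one_sided : ∀ {v w : X}, IsApproxMixPoint ρ J F ((1 - α) * (r * ε) / 2) v →
      IsApproxMixPoint ρ J F ((1 - α) * (r * ε) / 2) w → d v w < ε := by
    intro v w hv hw
    have hJvw := hF.one_sub_mul_dist_lt hρ_nonneg hρ_tri hα0 (hF_ne v) hv hw
    rw [add_halves, mul_lt_mul_iff_right₀ (sub_pos.2 hα1)] at hJvw
    exact lt_of_mul_lt_mul_left ((hJ_exp v w).trans_lt hJvw) hr.le
  exact max_lt (one_sided hx hy) (one_sided hy hx)

theorem dist_mem_le (hF : IsSetContraction ρ J F α) (hρ_nonneg : ∀ x y, 0 ≤ ρ x y)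
    (hρ_tri : ∀ x y z, ρ x z ≤ ρ x y + ρ y z) (hα : 0 ≤ α) (hb : b ∈ F x)
    (hu : IsApproxMixPoint ρ J F ε u) :
    ρ b (J x) ≤ (1 + α) * symm2 ρ (J x) (J u) + ε := by
  refine le_of_forall_pos_le_add fun η hη => ?_
  obtain ⟨c, hc, hbc⟩ := hF.exists_lt hρ_nonneg hα hb u hη
  calc ρ b (J x)
    _ ≤ ρ b c + (ρ c (J u) + ρ (J u) (J x)) :=
      (hρ_tri _ c _).trans (by gcongr; exact hρ_tri _ _ _)
    _ ≤ (α * symm2 ρ (J x) (J u) + η) + (ε + symm2 ρ (J x) (J u)) := by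
      gcongr
      · exact hbc.le.trans (by gcongr; exact le_symm2_left ρ _ _)
      · exact (le_symm2_right ρ _ _).trans (hu c hc).le
      · exact le_symm2_right ρ _ _
    _ = (1 + α) * symm2 ρ (J x) (J u) + ε + η := by ring

theorem symm2_mem_le (hF : IsSetContraction ρ J F α) (hρ_nonneg : ∀ x y, 0 ≤ ρ x y)
    (hρ_tri : ∀ x y z, ρ x z ≤ ρ x y + ρ y z) (hα : 0 ≤ α) (hb : b ∈ F x)
    (hu : IsApproxMixPoint ρ J F ε u) :
    symm2 ρ b (J x) ≤ (1 + α) * symm2 ρ (J x) (J u) + ε := by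
  refine max_le (hF.dist_mem_le hρ_nonneg hρ_tri hα hb hu) ?_
  have hswap := hF.swap.dist_mem_le (fun x y => hρ_nonneg y x)
    (fun x y z => (hρ_tri z y x).trans_eq (add_comm _ _)) hα hb hu.swap
  rwa [symm2_swap] at hswap

theorem eq_singleton (hF : IsSetContraction ρ J F α) (hρ_nonneg : ∀ x y, 0 ≤ ρ x y)
    (hρ_tri : ∀ x y z, ρ x z ≤ ρ x y + ρ y z) (hρ_T0 : ∀ x y, ρ x y = 0 → ρ y x = 0 → x = y)
    (hα : 0 ≤ α) (hx_ne : (F x).Nonempty)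
    (hx : ∀ ε > 0, ∃ u, IsApproxMixPoint ρ J F ε u ∧ symm2 ρ (J x) (J u) < ε) :
    F x = {J x} := by
  refine eq_singleton_iff_nonempty_unique_mem.2 ⟨hx_ne, fun b hb =>
    eq_of_forall_symm2_le hρ_nonneg hρ_T0 fun ε hε => ?_⟩
  obtain ⟨u, hu, hxu⟩ := hx (ε / (2 + α)) (by positivity)
  calc symm2 ρ b (J x)
    _ ≤ (1 + α) * symm2 ρ (J x) (J u) + ε / (2 + α) := hF.symm2_mem_le hρ_nonneg hρ_tri hα hb hu
    _ ≤ (1 + α) * (ε / (2 + α)) + ε / (2 + α) := by gcongr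
    _ = ε := by field_simp; ring

end IsSetContraction

end MixPoint

theorem stmt7_general {X Y : Type*} (d : X → X → ℝ) (ρ : Y → Y → ℝ)
    (hρ_nonneg : ∀ x y : Y, 0 ≤ ρ x y)
    (hρ_tri : ∀ x y z : Y, ρ x z ≤ ρ x y + ρ y z)
    (hρ_T0 : ∀ x y : Y, ρ x y = 0 → ρ y x = 0 → x = y)
    (hbicomplete : ∀ u : ℕ → X,
      (∀ ε : ℝ, 0 < ε → ∃ N : ℕ, ∀ m ≥ N, ∀ n ≥ N, symm2 d (u m) (u n) < ε) →
      ∃ l : X, ∀ ε : ℝ, 0 < ε → ∃ N : ℕ, ∀ n ≥ N, symm2 d (u n) l < ε)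
    (J : X → Y)
    (hJ_cont : ∀ x : X, ∀ ε : ℝ, 0 < ε → ∃ δ : ℝ, 0 < δ ∧
      ∀ y : X, symm2 d x y < δ → symm2 ρ (J x) (J y) < ε)
    (r : ℝ) (hr : 0 < r)
    (hJ_exp : ∀ x y : X, r * d x y ≤ ρ (J x) (J y))
    (F : X → Set Y)
    (hF_ne : ∀ x : X, (F x).Nonempty)
    (α : ℝ) (hα0 : 0 ≤ α) (hα1 : α < 1)
    (hcontr : IsSetContraction ρ J F α)
    (hmix : (⨅ x : X, ⨆ y ∈ F x, ENNReal.ofReal (symm2 ρ (J x) y)) = 0) :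
    ∃ x : X, F x = {J x} := by
  obtain ⟨u, hu⟩ := exists_seq_eventually_isApproxMixPoint hmix
  have hcauchy : ∀ ε > 0, ∃ N, ∀ m ≥ N, ∀ n ≥ N, symm2 d (u m) (u n) < ε := by
    intro ε hε
    obtain ⟨N, hN⟩ := eventually_atTop.1 (hu ((1 - α) * (r * ε) / 2)
      (by have := sub_pos.2 hα1; positivity))
    exact ⟨N, fun m hm n hn => hcontr.symm2_lt_of_isApproxMixPoint hρ_nonneg hρ_tri hr hJ_exp
      hF_ne hα0 hα1 (hN m hm) (hN n hn)⟩
  obtain ⟨x, hx⟩ := hbicomplete u hcauchy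
  refine ⟨x, hcontr.eq_singleton hρ_nonneg hρ_tri hρ_T0 hα0 (hF_ne x) fun ε hε => ?_⟩
  obtain ⟨δ, hδ, hJδ⟩ := hJ_cont x ε hε
  obtain ⟨n, hn_mix, hn_lim⟩ := ((hu ε hε).and (eventually_atTop.2 (hx δ hδ))).exists
  exact ⟨u n, hn_mix, hJδ (u n) ((symm2_comm d x (u n)).trans_lt hn_lim)⟩

theorem stmt7 {X : Type*} [Nonempty X]
    (d : X → X → ℝ)
    (hd_nonneg : ∀ x y : X, 0 ≤ d x y)
    (hd_refl : ∀ x : X, d x x = 0)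
    (hd_tri : ∀ x y z : X, d x z ≤ d x y + d y z)
    (hd_T0 : ∀ x y : X, d x y = 0 → d y x = 0 → x = y)
    (hbicomplete : ∀ u : ℕ → X,
      (∀ ε : ℝ, 0 < ε → ∃ N : ℕ, ∀ m ≥ N, ∀ n ≥ N, symm2 d (u m) (u n) < ε) →
      ∃ l : X, ∀ ε : ℝ, 0 < ε → ∃ N : ℕ, ∀ n ≥ N, symm2 d (u n) l < ε)
    (J : X → X)
    (hJ_cont : ∀ x : X, ∀ ε : ℝ, 0 < ε → ∃ δ : ℝ, 0 < δ ∧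
      ∀ y : X, symm2 d x y < δ → symm2 d (J x) (J y) < ε)
    (r : ℝ) (hr : 0 < r)
    (hJ_exp : ∀ x y : X, r * d x y ≤ d (J x) (J y))
    (F : X → Set X)
    (hF_ne : ∀ x : X, (F x).Nonempty)
    (hF_bdd : ∀ x : X, ∃ M : ℝ, ∀ a ∈ F x, ∀ c ∈ F x, symm2 d a c ≤ M)
    (hF_closed : ∀ x : X, ∀ u : ℕ → X, (∀ n : ℕ, u n ∈ F x) → ∀ l : X,
      Filter.Tendsto (fun n => symm2 d (u n) l) Filter.atTop (nhds (0 : ℝ)) → l ∈ F x)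
    (α : ℝ) (hα0 : 0 < α) (hα1 : α < 1) (hrα : r * α < 1)
    (hcontr : ∀ x y : X, qH d (F x) (F y) ≤ ENNReal.ofReal (α * d (J x) (J y)))
    (hmix : (⨅ x : X, ⨆ y ∈ F x, ENNReal.ofReal (symm2 d (J x) y)) = 0) :
    ∃ x : X, J x ∈ F x := by
  obtain ⟨x, hx⟩ := stmt7_general d d hd_nonneg hd_tri hd_T0 hbicomplete J hJ_cont r hr hJ_exp
    F hF_ne α hα0.le hα1 hcontr hmix
  exact ⟨x, hx ▸ mem_singleton (J x)⟩
end
end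

section
/- Let (X,d) be a bicomplete T0-quasi-metric space and J : X → X a single-valued map continuous with respect to d^s such that r·d(x,y) ≤ d(Jx,Jy) for all x,y ∈ X, for some constant r > 0. Let F : X → CB(X) be a set-valued map satisfying H(Fx,Fy) ≤ α·[d(Jx,Fy) + d(Fx,Jy)] for all x,y ∈ X, where 0 < α < 1/2 and 2rα < 1. Then there exists a unique x₀ ∈ X which is both a startpoint and an endpoint of J and F (i.e. H({Jx₀},Fx₀) = 0 = H(Fx₀,{Jx₀})) if and only if J and F have the approximate mix-point property, i.e. inf_{x∈X} sup_{y∈Fx} d^s(Jx,y) = 0. -/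
open Set Filter
open scoped ENNReal

noncomputable section

/-
Both sides of the equivalence concern the single extended pseudometric on sets obtained by
symmetrizing `qH`: a startpoint and endpoint is an `x` at distance `0` between `{J x}` and `F x`, and
the approximate mix-point property says that this distance has infimum `0`. The hypothesis on `F`
becomes a Chatterjea contraction relative to `x ↦ {J x}` for this pseudometric.

Along a sequence `u` on which the gap between `{J (u n)}` and `F (u n)` tends to `0`, the contraction
inequality bounds the distance from `F (u m)` to `F (u n)`, hence that from `J (u m)` to `J (u n)`,
by the gaps at `u m` and `u n`; as `J` is expanding up to the factor `r`, `u` is Cauchy. At its limit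
`l`, continuity of `J` and the contraction inequality give `J (u n) → J l` and `F (u n) → F l`, so
the gap at `l` is `0`. The same bound on distances by gaps shows that points with gap `0` coincide.
-/

open scoped NNReal Topology

section General

theorem le_inv_one_sub_mul_of_le_mul_add {a b c : ℝ≥0∞} (hc : c < 1) (ha : a ≠ ⊤)
    (h : a ≤ c * a + b) : a ≤ (1 - c)⁻¹ * b := by
  rw [← ENNReal.mul_le_iff_le_inv (tsub_pos_of_lt hc).ne' (ENNReal.sub_ne_top ENNReal.one_ne_top),
    ENNReal.sub_mul fun _ _ ↦ ha, one_mul]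
  exact tsub_le_iff_left.2 h

theorem cauchySeq_of_edist_le_mul_add {X : Type*} [PseudoEMetricSpace X] {u : ℕ → X}
    {b : ℕ → ℝ≥0∞} {C : ℝ≥0∞} (hC : C ≠ ⊤) (hb : Tendsto b atTop (𝓝 0))
    (h : ∀ m n, edist (u m) (u n) ≤ C * (b m + b n)) : CauchySeq u := by
  have hsum : Tendsto (fun p : ℕ × ℕ ↦ C * (b p.1 + b p.2)) atTop (𝓝 0) := by
    rw [← prod_atTop_atTop_eq]
    simpa using ENNReal.Tendsto.const_mul
      ((hb.comp tendsto_fst).add (hb.comp tendsto_snd)) (Or.inr hC)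
  rw [cauchySeq_iff_tendsto, uniformity_basis_edist.tendsto_right_iff]
  intro ε hε
  filter_upwards [hsum.eventually (gt_mem_nhds hε)] with p hp
  exact (h p.1 p.2).trans_lt hp

theorem exists_seq_tendsto_zero_of_iInf_eq_zero {ι : Type*} {φ : ι → ℝ≥0∞}
    (h : ⨅ i, φ i = 0) : ∃ u : ℕ → ι, Tendsto (fun n ↦ φ (u n)) atTop (𝓝 0) := by
  have hlt (n : ℕ) : ∃ i, φ i < (n : ℝ≥0∞)⁻¹ := by
    simp [← iInf_lt_iff, h]
  choose u hu using hlt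
  exact ⟨u, tendsto_of_tendsto_of_tendsto_of_le_of_le tendsto_const_nhds
    ENNReal.tendsto_inv_nat_nhds_zero (fun _ ↦ zero_le) fun n ↦ (hu n).le⟩

end General

/-- `g` is a Chatterjea contraction relative to `f` with constant `α`; Chatterjea's classical
condition is the case `f = id`. -/
def IsChatterjeaContraction {X Y : Type*} [EDist Y] (α : ℝ≥0∞) (f g : X → Y) : Prop :=
  ∀ x y, edist (g x) (g y) ≤ α * (edist (f x) (g y) + edist (g x) (f y))

namespace IsChatterjeaContraction

section Estimates

variable {X Y : Type*} [PseudoEMetricSpace Y] {α : ℝ≥0∞} {f g : X → Y} {x y : X}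

theorem edist_le_gap_add_gap (h : IsChatterjeaContraction α f g) (hα : 2 * α < 1)
    (hfin : edist (g x) (g y) ≠ ⊤) :
    edist (g x) (g y) ≤ (1 - 2 * α)⁻¹ * (α * (edist (f x) (g x) + edist (f y) (g y))) := by
  refine le_inv_one_sub_mul_of_le_mul_add hα hfin ?_
  calc edist (g x) (g y)
      ≤ α * (edist (f x) (g y) + edist (g x) (f y)) := h x y
    _ ≤ α * ((edist (f x) (g x) + edist (g x) (g y)) +
          (edist (g x) (g y) + edist (f y) (g y))) := by
        gcongr
        · exact edist_triangle _ _ _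
        · rw [edist_comm (f y)]
          exact edist_triangle _ _ _
    _ = 2 * α * edist (g x) (g y) + α * (edist (f x) (g x) + edist (f y) (g y)) := by ring

theorem edist_le_gap_add_edist (h : IsChatterjeaContraction α f g) (hα : α < 1)
    (hfin : edist (g x) (g y) ≠ ⊤) :
    edist (g x) (g y) ≤ (1 - α)⁻¹ * (α * (2 * edist (f x) (g x) + edist (f x) (f y))) := by
  refine le_inv_one_sub_mul_of_le_mul_add hα hfin ?_
  calc edist (g x) (g y)
      ≤ α * (edist (f x) (g y) + edist (g x) (f y)) := h x y
    _ ≤ α * ((edist (f x) (g x) + edist (g x) (g y)) +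
          (edist (f x) (g x) + edist (f x) (f y))) := by
        gcongr
        · exact edist_triangle _ _ _
        · rw [edist_comm (f x) (g x)]
          exact edist_triangle _ _ _
    _ = α * edist (g x) (g y) + α * (2 * edist (f x) (g x) + edist (f x) (f y)) := by ring

theorem edist_left_le_gap_add_gap (h : IsChatterjeaContraction α f g) (hα : 2 * α < 1)
    (hfin : edist (g x) (g y) ≠ ⊤) :
    edist (f x) (f y) ≤
      (1 + (1 - 2 * α)⁻¹ * α) * (edist (f x) (g x) + edist (f y) (g y)) :=
  calc edist (f x) (f y)
      ≤ edist (f x) (g x) + edist (g x) (g y) + edist (f y) (g y) := by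
        rw [edist_comm (f y)]
        exact edist_triangle4 _ _ _ _
    _ ≤ edist (f x) (g x) +
          (1 - 2 * α)⁻¹ * (α * (edist (f x) (g x) + edist (f y) (g y))) + edist (f y) (g y) := by
        gcongr
        exact h.edist_le_gap_add_gap hα hfin
    _ = (1 + (1 - 2 * α)⁻¹ * α) * (edist (f x) (g x) + edist (f y) (g y)) := by ring

end Estimates

section Coincidence

variable {X Y : Type*} [PseudoEMetricSpace Y] {α : ℝ≥0∞} {f g : X → Y} {u : ℕ → X} {l : X}

theorem exists_edist_le_mul_gap_add_gap [PseudoEMetricSpace X] {c : ℝ≥0}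
    (h : IsChatterjeaContraction α f g) (hα : 2 * α < 1) (hfin : ∀ x y, edist (g x) (g y) ≠ ⊤)
    (hf : AntilipschitzWith c f) :
    ∃ C : ℝ≥0∞, C ≠ ⊤ ∧
      ∀ x y, edist x y ≤ C * (edist (f x) (g x) + edist (f y) (g y)) := by
  have hα_top : α ≠ ⊤ := by
    rintro rfl
    simp at hα
  refine ⟨c * (1 + (1 - 2 * α)⁻¹ * α), ?_, fun x y ↦ ?_⟩
  · have hinv : (1 - 2 * α)⁻¹ ≠ ⊤ := ENNReal.inv_ne_top.2 (tsub_pos_of_lt hα).ne'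
    finiteness
  · calc edist x y ≤ c * edist (f x) (f y) := hf x y
      _ ≤ c * ((1 + (1 - 2 * α)⁻¹ * α) * (edist (f x) (g x) + edist (f y) (g y))) := by
          gcongr
          exact h.edist_left_le_gap_add_gap hα (hfin x y)
      _ = c * (1 + (1 - 2 * α)⁻¹ * α) * (edist (f x) (g x) + edist (f y) (g y)) := by ring

theorem gap_eq_zero_of_tendsto (h : IsChatterjeaContraction α f g) (hα : α < 1)
    (hfin : ∀ x y, edist (g x) (g y) ≠ ⊤) (hf : Tendsto (fun n ↦ f (u n)) atTop (𝓝 (f l)))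
    (hgap : Tendsto (fun n ↦ edist (f (u n)) (g (u n))) atTop (𝓝 0)) :
    edist (f l) (g l) = 0 := by
  have hinv : (1 - α)⁻¹ ≠ ⊤ := ENNReal.inv_ne_top.2 (tsub_pos_of_lt hα).ne'
  have hbound : Tendsto (fun n ↦
      (1 - α)⁻¹ * (α * (2 * edist (f (u n)) (g (u n)) + edist (f (u n)) (f l)))) atTop (𝓝 0) := by
    have hsum := (ENNReal.Tendsto.const_mul hgap (Or.inr (ENNReal.ofNat_ne_top (n := 2)))).add
      (tendsto_iff_edist_tendsto_0.1 hf)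
    simpa using ENNReal.Tendsto.const_mul
      (ENNReal.Tendsto.const_mul hsum (Or.inr hα.ne_top)) (Or.inr hinv)
  have hg : Tendsto (fun n ↦ g (u n)) atTop (𝓝 (g l)) :=
    tendsto_iff_edist_tendsto_0.2 <| tendsto_of_tendsto_of_tendsto_of_le_of_le
      tendsto_const_nhds hbound (fun _ ↦ zero_le)
      fun n ↦ h.edist_le_gap_add_edist hα (hfin (u n) l)
  exact tendsto_nhds_unique (hf.edist hg) hgap

theorem existsUnique_gap_eq_zero_iff [EMetricSpace X] [CompleteSpace X] {c : ℝ≥0}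
    (h : IsChatterjeaContraction α f g) (hα : 2 * α < 1) (hfin : ∀ x y, edist (g x) (g y) ≠ ⊤)
    (hf : Continuous f) (hf_anti : AntilipschitzWith c f) :
    (∃! x, edist (f x) (g x) = 0) ↔ ⨅ x, edist (f x) (g x) = 0 := by
  refine ⟨fun ⟨x, hx, _⟩ ↦ nonpos_iff_eq_zero.1 ((iInf_le _ x).trans hx.le), fun hinf ↦ ?_⟩
  obtain ⟨C, hC, hdist⟩ := h.exists_edist_le_mul_gap_add_gap hα hfin hf_anti
  obtain ⟨u, hu⟩ := exists_seq_tendsto_zero_of_iInf_eq_zero hinf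
  obtain ⟨l, hl⟩ := cauchySeq_tendsto_of_complete
    (cauchySeq_of_edist_le_mul_add hC hu fun m n ↦ hdist (u m) (u n))
  have hα_one : α < 1 := (le_mul_of_one_le_left' one_le_two).trans_lt hα
  have hgap : edist (f l) (g l) = 0 :=
    h.gap_eq_zero_of_tendsto hα_one hfin ((hf.tendsto l).comp hl) hu
  refine ⟨l, hgap, fun y hy ↦ edist_le_zero.1 ?_⟩
  simpa only [hy, hgap, add_zero, mul_zero] using hdist y l

end Coincidence

end IsChatterjeaContraction

section SymmHausdorff

variable {X : Type*} {d : X → X → ℝ}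

/-- The excess `sup_{a ∈ A} inf_{b ∈ B} d a b` of `A` over `B`, a one-sided half of `qH d A B`; the
other half is the excess of `B` over `A` for the conjugate `Function.swap d`. -/
def excess (d : X → X → ℝ) (A B : Set X) : ℝ≥0∞ :=
  ⨆ a ∈ A, ⨅ b ∈ B, ENNReal.ofReal (d a b)

theorem qH_eq_max_excess (d : X → X → ℝ) (A B : Set X) :
    qH d A B = max (excess d A B) (excess (Function.swap d) B A) :=
  rfl

theorem excess_self (hd : ∀ x, d x x = 0) (A : Set X) : excess d A A = 0 :=
  nonpos_iff_eq_zero.1 <| iSup₂_le fun a ha ↦ (iInf₂_le a ha).trans (by simp [hd])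

theorem excess_triangle (hd : ∀ x y z, d x z ≤ d x y + d y z) (A B C : Set X) :
    excess d A C ≤ excess d A B + excess d B C := by
  refine iSup₂_le fun a ha ↦ ?_
  calc ⨅ c ∈ C, ENNReal.ofReal (d a c)
      ≤ ⨅ b ∈ B, (ENNReal.ofReal (d a b) + ⨅ c ∈ C, ENNReal.ofReal (d b c)) := by
        simp only [ENNReal.add_iInf₂]
        refine le_iInf₂ fun b _ ↦ iInf₂_mono fun c _ ↦ ?_
        exact (ENNReal.ofReal_le_ofReal (hd a b c)).trans ENNReal.ofReal_add_le
    _ ≤ ⨅ b ∈ B, (ENNReal.ofReal (d a b) + excess d B C) := by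
        gcongr with b hb
        exact le_iSup₂ (f := fun b _ ↦ ⨅ c ∈ C, ENNReal.ofReal (d b c)) b hb
    _ = (⨅ b ∈ B, ENNReal.ofReal (d a b)) + excess d B C := (ENNReal.iInf₂_add _).symm
    _ ≤ excess d A B + excess d B C := by
        gcongr
        exact le_iSup₂ (f := fun a _ ↦ ⨅ b ∈ B, ENNReal.ofReal (d a b)) a ha

theorem qH_self (hd : ∀ x, d x x = 0) (A : Set X) : qH d A A = 0 := by
  rw [qH_eq_max_excess, excess_self hd, excess_self (d := Function.swap d) hd, max_self]

theorem qH_triangle (hd : ∀ x y z, d x z ≤ d x y + d y z) (A B C : Set X) :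
    qH d A C ≤ qH d A B + qH d B C := by
  have hd_swap (x y z : X) :
      Function.swap d x z ≤ Function.swap d x y + Function.swap d y z :=
    (hd z y x).trans_eq (add_comm _ _)
  simp only [qH_eq_max_excess]
  refine max_le ((excess_triangle hd A B C).trans ?_)
    ((excess_triangle hd_swap C B A).trans ?_)
  · exact add_le_add (le_max_left _ _) (le_max_left _ _)
  · rw [add_comm]
    exact add_le_add (le_max_right _ _) (le_max_right _ _)

theorem qH_singleton_left {B : Set X} (hB : B.Nonempty) (d : X → X → ℝ) (a : X) :
    qH d {a} B = ⨆ b ∈ B, ENNReal.ofReal (d a b) := by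
  simp only [qH, mem_singleton_iff, iSup_iSup_eq_left, iInf_iInf_eq_left]
  exact max_eq_right (biInf_le_biSup hB)

theorem qH_singleton_right {B : Set X} (hB : B.Nonempty) (d : X → X → ℝ) (a : X) :
    qH d B {a} = ⨆ b ∈ B, ENNReal.ofReal (d b a) := by
  simp only [qH, mem_singleton_iff, iSup_iSup_eq_left, iInf_iInf_eq_left]
  exact max_eq_left (biInf_le_biSup hB)

theorem dPS_le_qH_singleton (d : X → X → ℝ) (x : X) (A : Set X) : dPS d x A ≤ qH d {x} A := by
  simp [qH, dPS]

theorem dSP_le_qH_singleton (d : X → X → ℝ) (A : Set X) (x : X) : dSP d A x ≤ qH d A {x} := by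
  simp [qH, dSP]

theorem dPS_ne_top {A : Set X} (hA : A.Nonempty) (d : X → X → ℝ) (x : X) : dPS d x A ≠ ⊤ := by
  obtain ⟨a, ha⟩ := hA
  exact ne_top_of_le_ne_top ENNReal.ofReal_ne_top (iInf₂_le a ha)

theorem dSP_ne_top {A : Set X} (hA : A.Nonempty) (d : X → X → ℝ) (x : X) : dSP d A x ≠ ⊤ := by
  obtain ⟨a, ha⟩ := hA
  exact ne_top_of_le_ne_top ENNReal.ofReal_ne_top (iInf₂_le a ha)

/-- The symmetrization of the Hausdorff quasi-pseudometric `qH d`, for which a point is a startpoint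
and endpoint exactly when its image under `J` is at distance `0` from its image under `F`. It can be
smaller than the Hausdorff distance of `symm2 d`. -/
def symmHausdorff (d : X → X → ℝ) (A B : Set X) : ℝ≥0∞ :=
  max (qH d A B) (qH d B A)

theorem symmHausdorff_singleton_left {B : Set X} (hB : B.Nonempty) (d : X → X → ℝ) (a : X) :
    symmHausdorff d {a} B = ⨆ b ∈ B, ENNReal.ofReal (symm2 d a b) := by
  simp only [symmHausdorff, symm2, qH_singleton_left hB, qH_singleton_right hB,
    ENNReal.ofReal_max, iSup_sup_eq]

theorem symmHausdorff_singleton_singleton (d : X → X → ℝ) (a b : X) :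
    symmHausdorff d {a} {b} = ENNReal.ofReal (symm2 d a b) := by
  simp [symmHausdorff_singleton_left]

theorem symmHausdorff_eq_zero_iff {A B : Set X} :
    symmHausdorff d A B = 0 ↔ qH d A B = 0 ∧ qH d B A = 0 :=
  max_eq_bot

end SymmHausdorff

/-- A T0-quasi-metric: a distance function that need not be symmetric and whose symmetrization
separates points. -/
structure IsT0QuasiMetric {X : Type*} (d : X → X → ℝ) : Prop where
  nonneg : ∀ x y, 0 ≤ d x y
  refl : ∀ x, d x x = 0
  triangle : ∀ x y z, d x z ≤ d x y + d y z
  eq_of_eq_zero : ∀ x y, d x y = 0 → d y x = 0 → x = y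

/-- Bicompleteness of `d`: sequences that are Cauchy for `symm2 d` converge for `symm2 d`. It is
stated with explicit `ε`, as a bare `d` provides no `MetricSpace` instance. -/
def IsBicomplete {X : Type*} (d : X → X → ℝ) : Prop :=
  ∀ u : ℕ → X,
    (∀ ε : ℝ, 0 < ε → ∃ N : ℕ, ∀ m ≥ N, ∀ n ≥ N, symm2 d (u m) (u n) < ε) →
    ∃ l : X, ∀ ε : ℝ, 0 < ε → ∃ N : ℕ, ∀ n ≥ N, symm2 d (u n) l < ε

namespace IsT0QuasiMetric

variable {X : Type*} {d : X → X → ℝ}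

/-- The metric space `(X, d^s)`, which carries the topology and completeness notions attached to a
T0-quasi-metric. -/
abbrev metricSpace (hd : IsT0QuasiMetric d) : MetricSpace X where
  dist := symm2 d
  dist_self x := by simp only [symm2, hd.refl, max_self]
  dist_comm x y := max_comm _ _
  dist_triangle x y z := max_le
    ((hd.triangle x y z).trans (add_le_add (le_max_left _ _) (le_max_left _ _)))
    ((hd.triangle z y x).trans <| (add_comm _ _).trans_le <|
      add_le_add (le_max_right _ _) (le_max_right _ _))
  eq_of_dist_eq_zero {x y} h := hd.eq_of_eq_zero x y
    ((le_max_left _ _).trans_eq h |>.antisymm (hd.nonneg x y))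
    ((le_max_right _ _).trans_eq h |>.antisymm (hd.nonneg y x))

/-- The extended pseudometric `symmHausdorff d` on all subsets of `X`, the empty set and unbounded
sets included. -/
abbrev hausdorffSpace (hd : IsT0QuasiMetric d) : PseudoEMetricSpace (Set X) where
  edist := symmHausdorff d
  edist_self A := by simp only [symmHausdorff, qH_self hd.refl, max_self]
  edist_comm A B := max_comm _ _
  edist_triangle A B C := max_le
    ((qH_triangle hd.triangle A B C).trans (add_le_add (le_max_left _ _) (le_max_left _ _)))
    ((qH_triangle hd.triangle C B A).trans <| (add_comm _ _).trans_le <|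
      add_le_add (le_max_right _ _) (le_max_right _ _))

theorem isometry_singleton (hd : IsT0QuasiMetric d) :
    letI := hd.metricSpace
    letI := hd.hausdorffSpace
    Isometry (fun x ↦ {x} : X → Set X) := by
  let := hd.metricSpace
  intro x y
  rw [edist_dist]
  exact symmHausdorff_singleton_singleton d x y

theorem completeSpace (hd : IsT0QuasiMetric d) (hcomplete : IsBicomplete d) :
    letI := hd.metricSpace
    CompleteSpace X := by
  let := hd.metricSpace
  refine Metric.complete_of_cauchySeq_tendsto fun u hu ↦ ?_
  obtain ⟨l, hl⟩ := hcomplete u (Metric.cauchySeq_iff.1 hu)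
  exact ⟨l, Metric.tendsto_atTop.2 hl⟩

theorem continuous_of_eps_delta (hd : IsT0QuasiMetric d) {J : X → X}
    (hJ : ∀ x : X, ∀ ε : ℝ, 0 < ε → ∃ δ : ℝ, 0 < δ ∧
      ∀ y : X, symm2 d x y < δ → symm2 d (J x) (J y) < ε) :
    letI := hd.metricSpace
    Continuous J := by
  let := hd.metricSpace
  refine Metric.continuous_iff.2 fun x ε hε ↦ ?_
  obtain ⟨δ, hδ, hJδ⟩ := hJ x ε hε
  refine ⟨δ, hδ, fun y hy ↦ ?_⟩
  rw [dist_comm] at hy ⊢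
  exact hJδ y hy

theorem antilipschitzWith (hd : IsT0QuasiMetric d) {J : X → X} {r : ℝ} (hr : 0 < r)
    (hJ : ∀ x y, r * d x y ≤ d (J x) (J y)) :
    letI := hd.metricSpace
    AntilipschitzWith r⁻¹.toNNReal J := by
  let := hd.metricSpace
  refine AntilipschitzWith.of_le_mul_dist fun x y ↦ ?_
  rw [Real.coe_toNNReal _ (inv_nonneg.2 hr.le), le_inv_mul_iff₀ hr]
  change r * max (d x y) (d y x) ≤ max (d (J x) (J y)) (d (J y) (J x))
  rw [mul_max_of_nonneg _ _ hr.le]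
  exact max_le_max (hJ x y) (hJ y x)

theorem isChatterjeaContraction (hd : IsT0QuasiMetric d) {J : X → X} {F : X → Set X} {α : ℝ≥0∞}
    (h : ∀ x y, qH d (F x) (F y) ≤ α * (dPS d (J x) (F y) + dSP d (F x) (J y))) :
    letI := hd.hausdorffSpace
    IsChatterjeaContraction α (fun x ↦ {J x}) F := by
  have h_qH (x y : X) : qH d (F x) (F y) ≤ α * (qH d {J x} (F y) + qH d (F x) {J y}) := by
    refine (h x y).trans ?_
    gcongr
    · exact dPS_le_qH_singleton d (J x) (F y)
    · exact dSP_le_qH_singleton d (F x) (J y)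
  intro x y
  refine max_le ((h_qH x y).trans ?_) ((h_qH y x).trans ?_)
  · gcongr <;> exact le_max_left _ _
  · rw [add_comm]
    gcongr <;> exact le_max_right _ _

end IsT0QuasiMetric

theorem symmHausdorff_ne_top_of_qH_le {X : Type*} {d : X → X → ℝ} {J : X → X} {F : X → Set X}
    {α : ℝ≥0∞} (hα : α ≠ ⊤) (hF : ∀ x, (F x).Nonempty)
    (h : ∀ x y, qH d (F x) (F y) ≤ α * (dPS d (J x) (F y) + dSP d (F x) (J y))) (x y : X) :
    symmHausdorff d (F x) (F y) ≠ ⊤ := by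
  have h_qH (x y : X) : qH d (F x) (F y) < ⊤ :=
    (h x y).trans_lt <| ENNReal.mul_lt_top hα.lt_top <|
      ENNReal.add_lt_top.2 ⟨(dPS_ne_top (hF y) d (J x)).lt_top, (dSP_ne_top (hF x) d (J y)).lt_top⟩
  exact (max_lt (h_qH x y) (h_qH y x)).ne

theorem stmt10_general {X : Type*} {d : X → X → ℝ} (hd : IsT0QuasiMetric d)
    (hbicomplete : IsBicomplete d) {J : X → X}
    (hJ_cont : ∀ x : X, ∀ ε : ℝ, 0 < ε → ∃ δ : ℝ, 0 < δ ∧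
      ∀ y : X, symm2 d x y < δ → symm2 d (J x) (J y) < ε)
    {r : ℝ} (hr : 0 < r) (hJ_exp : ∀ x y : X, r * d x y ≤ d (J x) (J y))
    {F : X → Set X} (hF_ne : ∀ x : X, (F x).Nonempty)
    {α : ℝ} (hα : α < 1 / 2)
    (hcontr : ∀ x y : X,
      qH d (F x) (F y) ≤ ENNReal.ofReal α * (dPS d (J x) (F y) + dSP d (F x) (J y))) :
    (∃! x₀ : X, qH d {J x₀} (F x₀) = 0 ∧ qH d (F x₀) {J x₀} = 0) ↔
      (⨅ x : X, ⨆ y ∈ F x, ENNReal.ofReal (symm2 d (J x) y)) = 0 := by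
  let := hd.metricSpace
  let := hd.hausdorffSpace
  have := hd.completeSpace hbicomplete
  have hα_two : 2 * ENNReal.ofReal α < 1 := by
    rw [← ENNReal.ofReal_ofNat, ← ENNReal.ofReal_mul zero_le_two, ENNReal.ofReal_lt_one]
    linarith
  have hJ_single : Continuous (fun x ↦ {J x} : X → Set X) :=
    hd.isometry_singleton.continuous.comp (hd.continuous_of_eps_delta hJ_cont)
  have hJ_anti := hd.isometry_singleton.antilipschitz.comp (hd.antilipschitzWith hr hJ_exp)
  simp only [← symmHausdorff_singleton_left (hF_ne _), ← symmHausdorff_eq_zero_iff]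
  exact (hd.isChatterjeaContraction hcontr).existsUnique_gap_eq_zero_iff hα_two
    (symmHausdorff_ne_top_of_qH_le ENNReal.ofReal_ne_top hF_ne hcontr) hJ_single hJ_anti

theorem stmt10 {X : Type*} [Nonempty X]
    (d : X → X → ℝ)
    (hd_nonneg : ∀ x y : X, 0 ≤ d x y)
    (hd_refl : ∀ x : X, d x x = 0)
    (hd_tri : ∀ x y z : X, d x z ≤ d x y + d y z)
    (hd_T0 : ∀ x y : X, d x y = 0 → d y x = 0 → x = y)
    (hbicomplete : ∀ u : ℕ → X,
      (∀ ε : ℝ, 0 < ε → ∃ N : ℕ, ∀ m ≥ N, ∀ n ≥ N, symm2 d (u m) (u n) < ε) →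
      ∃ l : X, ∀ ε : ℝ, 0 < ε → ∃ N : ℕ, ∀ n ≥ N, symm2 d (u n) l < ε)
    (J : X → X)
    (hJ_cont : ∀ x : X, ∀ ε : ℝ, 0 < ε → ∃ δ : ℝ, 0 < δ ∧
      ∀ y : X, symm2 d x y < δ → symm2 d (J x) (J y) < ε)
    (r : ℝ) (hr : 0 < r)
    (hJ_exp : ∀ x y : X, r * d x y ≤ d (J x) (J y))
    (F : X → Set X)
    (hF_ne : ∀ x : X, (F x).Nonempty)
    (hF_bdd : ∀ x : X, ∃ M : ℝ, ∀ a ∈ F x, ∀ c ∈ F x, symm2 d a c ≤ M)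
    (hF_closed : ∀ x : X, ∀ u : ℕ → X, (∀ n : ℕ, u n ∈ F x) → ∀ l : X,
      Filter.Tendsto (fun n => symm2 d (u n) l) Filter.atTop (nhds (0 : ℝ)) → l ∈ F x)
    (α : ℝ) (hα0 : 0 < α) (hα1 : α < 1 / 2) (hrα : 2 * r * α < 1)
    (hcontr : ∀ x y : X, qH d (F x) (F y) ≤ ENNReal.ofReal α * (dPS d (J x) (F y) + dSP d (F x) (J y)))
    :
    (∃! x₀ : X, qH d {J x₀} (F x₀) = 0 ∧ qH d (F x₀) {J x₀} = 0) ↔ (⨅ x : X, ⨆ y ∈ F x, ENNReal.ofReal (symm2 d (J x) y)) = 0 := by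
  exact stmt10_general ⟨hd_nonneg, hd_refl, hd_tri, hd_T0⟩ hbicomplete hJ_cont hr hJ_exp hF_ne hα1
    hcontr
end
end
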